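/- Let T > 0, let x, y : [0, T] → ℝ with y bounded, right-continuous at every point and admitting a left limit at every point of (0, T], and let x_n, y_n : [0, T] → ℝ (n ∈ ℕ) with each y_n measurable. Suppose there exists a single sequence of time-changes (λ_n)_n on [0, T] such that sup_{0≤t≤T} |x_n(t) − x(λ_n(t))| → 0, sup_{0≤t≤T} |y_n(t) − y(λ_n(t))| → 0 and sup_{0≤t≤T} |t − λ_n(t)| → 0 as n → ∞. Then, with the same sequence (λ_n)_n, sup_{0≤t≤T} ( |x_n(t) − x(λ_n(t))| + | ∫_0^t y_n(s) ds − ∫_0^{λ_n(t)} y(s) ds | ) → 0 as n → ∞; in particular the pairs (x_n, t ↦ ∫_0^t y_n(s) ds) converge to (x, t ↦ ∫_0^t y(s) ds) jointly with a common sequence of time-changes. -/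

import Mathlib

open Set MeasureTheory

/-!
A function with left limits has only countably many discontinuities, so `y` is almost everywhere
continuous. At a continuity point `t` the convergences `yₙ t - y (λₙ t) → 0` and `λₙ t → t` force
`yₙ t → y t`, and bounded convergence gives `yₙ → y` in `L¹`. The claim then follows from
`∫₀ᵗ yₙ - ∫₀^{λₙ t} y = ∫₀ᵗ (yₙ - y) + ∫_{λₙ t}^t y`, where both terms are small uniformly in `t`.
-/

open Filter Topology ENNReal

section Discontinuities

variable {α F : Type*} [TopologicalSpace α] [PseudoEMetricSpace F] {f : α → F}

theorem tendsto_oscillation_nhdsWithin_zero {U : Set α} (hU : IsOpen U) {a : α} {L : F}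
    (hf : Tendsto f (𝓝[U] a) (𝓝 L)) : Tendsto (oscillation f) (𝓝[U] a) (𝓝 0) := by
  refine ENNReal.tendsto_nhds_zero.2 fun ε hε ↦ ?_
  have hball : ∀ᶠ s in 𝓝[U] a, f s ∈ Metric.eball L (ε / 2) :=
    hf (Metric.eball_mem_nhds L (ENNReal.half_pos hε.ne'))
  filter_upwards [eventually_eventually_nhdsWithin.2 hball, self_mem_nhdsWithin] with s hs hsU
  rw [hU.nhdsWithin_eq hsU] at hs
  calc oscillation f s ≤ Metric.ediam (Metric.eball L (ε / 2)) := biInf_le _ hs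
    _ ≤ 2 * (ε / 2) := Metric.ediam_eball_le
    _ = ε := ENNReal.mul_div_cancel two_ne_zero ofNat_ne_top

variable [LinearOrder α] [OrderTopology α] [SecondCountableTopology α]

theorem countable_setOf_tendsto_nhdsLT_le_oscillation (f : α → F) {ε : ℝ≥0∞} (hε : 0 < ε) :
    {t | (∃ L, Tendsto f (𝓝[<] t) (𝓝 L)) ∧ ε ≤ oscillation f t}.Countable := by
  refine countable_setOfPred_isolated_left_within.mono (fun t ht ↦ And.intro ht ?_)
  obtain ⟨⟨L, hL⟩, -⟩ := ht
  have hsmall : ∀ᶠ s in 𝓝[<] t, oscillation f s < ε :=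
    (tendsto_oscillation_nhdsWithin_zero isOpen_Iio hL).eventually_lt_const hε
  rw [inter_comm, nhdsWithin_inter', inf_principal_eq_bot]
  filter_upwards [hsmall] with s hs hs'
  exact hs.not_ge hs'.2

theorem countable_setOf_tendsto_nhdsLT_not_continuousAt (f : α → F) :
    {t | (∃ L, Tendsto f (𝓝[<] t) (𝓝 L)) ∧ ¬ContinuousAt f t}.Countable := by
  refine (countable_iUnion fun n : ℕ ↦ countable_setOf_tendsto_nhdsLT_le_oscillation f
    (ENNReal.inv_pos.2 (natCast_ne_top n))).mono ?_
  rintro t ⟨hlim, hdisc⟩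
  rw [← Oscillation.eq_zero_iff_continuousAt] at hdisc
  obtain ⟨n, hn⟩ := ENNReal.exists_inv_nat_lt hdisc
  exact mem_iUnion.2 ⟨n, hlim, hn.le⟩

theorem ae_restrict_continuousAt_of_tendsto_nhdsLT [MeasurableSpace α] {μ : Measure α}
    [NullSingletonClass μ] {s : Set α} (hs : MeasurableSet s)
    (hf : ∀ t ∈ s, ∃ L, Tendsto f (𝓝[<] t) (𝓝 L)) : ∀ᵐ t ∂μ.restrict s, ContinuousAt f t := by
  rw [ae_restrict_iff' hs]
  filter_upwards [(countable_setOf_tendsto_nhdsLT_not_continuousAt f).ae_notMem μ] with t ht hts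
  exact not_not.1 fun hdisc ↦ ht ⟨hf t hts, hdisc⟩

end Discontinuities

section UniformConvergence

variable {α ι : Type*} [Nonempty ι] [SemilatticeSup ι] {s : Set α}

theorem tendstoUniformlyOn_atTop_iff_dist_le {β : Type*} [PseudoMetricSpace β] {F : ι → α → β}
    {f : α → β} : TendstoUniformlyOn F f atTop s ↔
      ∀ ε > (0 : ℝ), ∃ N, ∀ n ≥ N, ∀ t ∈ s, dist (f t) (F n t) ≤ ε := by
  simp only [Metric.tendstoUniformlyOn_iff, ← eventually_atTop]
  refine ⟨fun h ε hε ↦ (h ε hε).mono fun n hn t ht ↦ (hn t ht).le, fun h ε hε ↦ ?_⟩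
  exact (h (ε / 2) (half_pos hε)).mono fun n hn t ht ↦ (hn t ht).trans_lt (half_lt_self hε)

theorem tendstoUniformlyOn_zero_atTop_iff_norm_le {E : Type*} [SeminormedAddCommGroup E]
    {F : ι → α → E} : TendstoUniformlyOn F 0 atTop s ↔
      ∀ ε > (0 : ℝ), ∃ N, ∀ n ≥ N, ∀ t ∈ s, ‖F n t‖ ≤ ε := by
  simp only [tendstoUniformlyOn_atTop_iff_dist_le, Pi.zero_apply, dist_zero_left]

end UniformConvergence

section Convergence

variable {α ι E : Type*} [SeminormedAddCommGroup E] {p : Filter ι} {M : ℝ} {s : Set α}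
  {y : α → E} {yn : ι → α → E} {l : ι → α → α}

theorem tendsto_of_tendsto_sub_comp [TopologicalSpace α] {t : α} {z : ι → E} {u : ι → α}
    (hy : ContinuousAt y t) (hz : Tendsto (fun n ↦ z n - y (u n)) p (𝓝 0))
    (hu : Tendsto u p (𝓝 t)) : Tendsto z p (𝓝 (y t)) := by
  simpa using hz.add (hy.tendsto.comp hu)

theorem eventually_forall_norm_le_of_tendstoUniformlyOn_sub_comp (hy : ∀ t ∈ s, ‖y t‖ ≤ M)
    (hl : ∀ n, MapsTo (l n) s s)
    (hyn : TendstoUniformlyOn (fun n t ↦ yn n t - y (l n t)) 0 p s) :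
    ∀ᶠ n in p, ∀ t ∈ s, ‖yn n t‖ ≤ M + 1 := by
  filter_upwards [SeminormedAddGroup.tendstoUniformlyOn_zero.1 hyn 1 one_pos] with n hn t ht
  calc ‖yn n t‖ ≤ ‖y (l n t)‖ + ‖yn n t - y (l n t)‖ := norm_le_norm_add_norm_sub' _ _
    _ ≤ M + 1 := add_le_add (hy _ (hl n ht)) (hn t ht).le

theorem tendsto_integral_norm_sub_of_bounded [MeasurableSpace α] {μ : Measure α}
    [IsFiniteMeasure μ] [p.IsCountablyGenerated] {C : ℝ} (hy_meas : AEStronglyMeasurable y μ)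
    (hyn_meas : ∀ n, AEStronglyMeasurable (yn n) μ) (hy : ∀ᵐ t ∂μ, ‖y t‖ ≤ M)
    (hyn : ∀ᶠ n in p, ∀ᵐ t ∂μ, ‖yn n t‖ ≤ C)
    (hlim : ∀ᵐ t ∂μ, Tendsto (yn · t) p (𝓝 (y t))) :
    Tendsto (fun n ↦ ∫ t, ‖yn n t - y t‖ ∂μ) p (𝓝 0) := by
  rw [← integral_zero α ℝ (μ := μ)]
  refine tendsto_integral_filter_of_dominated_convergence (fun _ ↦ C + M)
    (.of_forall fun n ↦ ((hyn_meas n).sub hy_meas).norm) ?_ (integrable_const _) ?_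
  · filter_upwards [hyn] with n hn
    filter_upwards [hn, hy] with t hnt ht
    rw [norm_norm]
    exact norm_sub_le_of_le hnt ht
  · filter_upwards [hlim] with t ht
    exact tendsto_iff_norm_sub_tendsto_zero.1 ht

end Convergence

section IntervalIntegral

variable {E : Type*} [NormedAddCommGroup E] [NormedSpace ℝ E] {a b M : ℝ}

theorem norm_intervalIntegral_sub_intervalIntegral_le {f g : ℝ → E} {t u : ℝ}
    (hf : IntegrableOn f (Ioc a b)) (hg : IntegrableOn g (Ioc a b))
    (hgM : ∀ s ∈ Icc a b, ‖g s‖ ≤ M) (ht : t ∈ Icc a b) (hu : u ∈ Icc a b) :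
    ‖(∫ s in a..t, f s) - ∫ s in a..u, g s‖ ≤
      (∫ s in Ioc a b, ‖f s - g s‖) + M * |t - u| := by
  have integrable_to {h : ℝ → E} (hh : IntegrableOn h (Ioc a b)) {c : ℝ} (hc : c ∈ Icc a b) :
      IntervalIntegrable h volume a c :=
    (intervalIntegrable_iff_integrableOn_Ioc_of_le hc.1).2
      (hh.mono_set (Ioc_subset_Ioc_right hc.2))
  have hsplit : (∫ s in a..t, f s) - ∫ s in a..u, g s =
      (∫ s in a..t, (f s - g s)) + ∫ s in u..t, g s := by
    rw [intervalIntegral.integral_sub (integrable_to hf ht) (integrable_to hg ht),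
      ← intervalIntegral.integral_interval_sub_left (integrable_to hg ht) (integrable_to hg hu),
      sub_add_sub_cancel]
  have hdiff : ‖∫ s in a..t, (f s - g s)‖ ≤ ∫ s in Ioc a b, ‖f s - g s‖ := by
    refine (intervalIntegral.norm_integral_le_integral_norm ht.1).trans ?_
    rw [intervalIntegral.integral_of_le ht.1]
    exact setIntegral_mono_set (hf.sub hg).norm (.of_forall fun _ ↦ norm_nonneg _)
      (Ioc_subset_Ioc_right ht.2).eventuallyLE
  have hrest : ‖∫ s in u..t, g s‖ ≤ M * |t - u| :=
    intervalIntegral.norm_integral_le_of_norm_le_const fun s hs ↦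
      hgM s (uIcc_subset_Icc hu ht (uIoc_subset_uIcc hs))
  rw [hsplit]
  exact norm_add_le_of_le hdiff hrest

theorem tendstoUniformlyOn_intervalIntegral_sub {ι : Type*} {p : Filter ι} {y : ℝ → E}
    {yn : ι → ℝ → E} {l : ι → ℝ → ℝ} (hy_int : IntegrableOn y (Ioc a b))
    (hyn_int : ∀ᶠ n in p, IntegrableOn (yn n) (Ioc a b)) (hy : ∀ t ∈ Icc a b, ‖y t‖ ≤ M)
    (hl_maps : ∀ n, MapsTo (l n) (Icc a b) (Icc a b))
    (hlim : Tendsto (fun n ↦ ∫ t in Ioc a b, ‖yn n t - y t‖) p (𝓝 0))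
    (hl : TendstoUniformlyOn l id p (Icc a b)) :
    TendstoUniformlyOn (fun n t ↦ (∫ s in a..t, yn n s) - ∫ s in a..(l n t), y s) 0 p
      (Icc a b) := by
  refine SeminormedAddGroup.tendstoUniformlyOn_zero.2 fun ε hε ↦ ?_
  obtain ⟨δ, hδ, hMδ⟩ := exists_pos_mul_lt (half_pos hε) M
  filter_upwards [hyn_int, hlim.eventually_lt_const (half_pos hε),
    Metric.tendstoUniformlyOn_iff.1 hl δ hδ] with n hn_int hn_lim hn_l t ht
  have hM : 0 ≤ M := (norm_nonneg _).trans (hy t ht)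
  have hshift : M * |t - l n t| ≤ M * δ := by
    gcongr
    exact (hn_l t ht).le
  linarith [norm_intervalIntegral_sub_intervalIntegral_le hn_int hy_int hy ht (hl_maps n ht)]

end IntervalIntegral

theorem joint_integral_skorohod_convergence_general {ι E F : Type*} [NormedAddCommGroup E]
    [NormedSpace ℝ E] [SeminormedAddCommGroup F] {p : Filter ι} [p.NeBot]
    [p.IsCountablyGenerated] {a b M : ℝ} {x : ℝ → F} {y : ℝ → E} {xn : ι → ℝ → F}
    {yn : ι → ℝ → E} {l : ι → ℝ → ℝ} (hy_bdd : ∀ t ∈ Icc a b, ‖y t‖ ≤ M)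
    (hy_cont : ∀ᵐ t ∂volume.restrict (Ioc a b), ContinuousAt y t)
    (hyn_meas : ∀ n, AEStronglyMeasurable (yn n) (volume.restrict (Ioc a b)))
    (hl_maps : ∀ n, MapsTo (l n) (Icc a b) (Icc a b))
    (hx : TendstoUniformlyOn (fun n t ↦ xn n t - x (l n t)) 0 p (Icc a b))
    (hy : TendstoUniformlyOn (fun n t ↦ yn n t - y (l n t)) 0 p (Icc a b))
    (hl : TendstoUniformlyOn l id p (Icc a b)) :
    TendstoUniformlyOn (fun n t ↦ ‖xn n t - x (l n t)‖ +
      ‖(∫ s in a..t, yn n s) - ∫ s in a..(l n t), y s‖) 0 p (Icc a b) := by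
  have ae_of_Icc {P : ℝ → Prop} (h : ∀ t ∈ Icc a b, P t) : ∀ᵐ t ∂volume.restrict (Ioc a b), P t :=
    ae_restrict_of_forall_mem measurableSet_Ioc fun t ht ↦ h t (Ioc_subset_Icc_self ht)
  have hlim : ∀ᵐ t ∂volume.restrict (Ioc a b), Tendsto (yn · t) p (𝓝 (y t)) := by
    filter_upwards [hy_cont, ae_of_Icc fun _ ↦ hy.tendsto_at, ae_of_Icc fun _ ↦ hl.tendsto_at]
      with t hcont hyt hlt using tendsto_of_tendsto_sub_comp hcont hyt hlt
  have hy_meas := aestronglyMeasurable_of_tendsto_ae p hyn_meas hlim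
  have hyn_bdd := (eventually_forall_norm_le_of_tendstoUniformlyOn_sub_comp hy_bdd hl_maps hy).mono
    fun _ hn ↦ ae_of_Icc hn
  have hy_int : IntegrableOn y (Ioc a b) :=
    .of_bound measure_Ioc_lt_top hy_meas M (ae_of_Icc hy_bdd)
  have hyn_int : ∀ᶠ n in p, IntegrableOn (yn n) (Ioc a b) :=
    hyn_bdd.mono fun n hn ↦ .of_bound measure_Ioc_lt_top (hyn_meas n) (M + 1) hn
  have hint := tendstoUniformlyOn_intervalIntegral_sub hy_int hyn_int hy_bdd hl_maps
    (tendsto_integral_norm_sub_of_bounded hy_meas hyn_meas (ae_of_Icc hy_bdd) hyn_bdd hlim) hl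
  simpa [Function.comp_def, Pi.zero_def, Pi.add_def] using
    (uniformContinuous_norm.comp_tendstoUniformlyOn hx).add
      (uniformContinuous_norm.comp_tendstoUniformlyOn hint)

theorem joint_integral_skorohod_convergence (T : ℝ) (hT : 0 < T)
    (x y : ℝ → ℝ) (xn yn : ℕ → ℝ → ℝ) (l : ℕ → ℝ → ℝ)
    (hy_bdd : ∃ M : ℝ, ∀ t ∈ Icc (0 : ℝ) T, |y t| ≤ M)
    (hy_right : ∀ t ∈ Icc (0 : ℝ) T, ContinuousWithinAt y (Ici t) t)
    (hy_left : ∀ t ∈ Ioc (0 : ℝ) T, ∃ L : ℝ,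
      Filter.Tendsto y (nhdsWithin t (Iio t)) (nhds L))
    (hyn_meas : ∀ n, Measurable (yn n))
    (hl_cont : ∀ n, ContinuousOn (l n) (Icc (0 : ℝ) T))
    (hl_mono : ∀ n, StrictMonoOn (l n) (Icc (0 : ℝ) T))
    (hl_maps : ∀ n, MapsTo (l n) (Icc (0 : ℝ) T) (Icc (0 : ℝ) T))
    (hl0 : ∀ n, l n 0 = 0) (hlT : ∀ n, l n T = T)
    (hxconv : ∀ ε > (0 : ℝ), ∃ N, ∀ n ≥ N, ∀ t ∈ Icc (0 : ℝ) T, |xn n t - x (l n t)| ≤ ε)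
    (hyconv : ∀ ε > (0 : ℝ), ∃ N, ∀ n ≥ N, ∀ t ∈ Icc (0 : ℝ) T, |yn n t - y (l n t)| ≤ ε)
    (hlconv : ∀ ε > (0 : ℝ), ∃ N, ∀ n ≥ N, ∀ t ∈ Icc (0 : ℝ) T, |t - l n t| ≤ ε) :
    ∀ ε > (0 : ℝ), ∃ N, ∀ n ≥ N, ∀ t ∈ Icc (0 : ℝ) T,
      |xn n t - x (l n t)| +
        |(∫ s in (0 : ℝ)..t, yn n s) - ∫ s in (0 : ℝ)..(l n t), y s| ≤ ε := by
  obtain ⟨M, hM⟩ := hy_bdd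
  have hsum := tendstoUniformlyOn_zero_atTop_iff_norm_le.1 <|
    joint_integral_skorohod_convergence_general (x := x) (xn := xn) hM
      (ae_restrict_continuousAt_of_tendsto_nhdsLT measurableSet_Ioc hy_left)
      (fun n ↦ (hyn_meas n).aestronglyMeasurable) hl_maps
      (tendstoUniformlyOn_zero_atTop_iff_norm_le.2 hxconv)
      (tendstoUniformlyOn_zero_atTop_iff_norm_le.2 hyconv)
      (tendstoUniformlyOn_atTop_iff_dist_le.2 hlconv)
  exact fun ε hε ↦ (hsum ε hε).imp fun N hN n hn t ht ↦ (le_abs_self _).trans (hN n hn t ht)
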